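/- Let G be a finite group such that every conjugacy class K of G satisfies that K² is a union of conjugacy classes all of which are central except at most one; that is, for every x ∈ G there exists d ∈ G with (x^G)² ⊆ Z(G) ∪ d^G. Then there exist normal subgroups N ≤ M of G such that N is nilpotent, the quotient M/N is a 2-group, and the quotient G/M is nilpotent; in particular G is solvable. -/

import Mathlib

open Pointwise

/-- The conjugacy class of `x` in `G`. -/
def conjClass {G : Type*} [Group G] (x : G) : Set G :=
  {a : G | ∃ g : G, a = g⁻¹ * x * g}

open Subgroup
open Finset (HasAntidiagonal)

/-!
A real element of odd order lies in the Fitting subgroup `F`. This can be checked modulo `Z(G)`,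
where all nontrivial products of two elements of a conjugacy class are conjugate. If such a real
`y` has at least three conjugates, then `y` is conjugate to `y ^ 2`, hence to every nontrivial
product of two of its conjugates, so the normal closure of `y` consists of `1` and the class of
`y`; otherwise the class of `y` is contained in `{y, y⁻¹}`, and the normal closure is abelian.

The quotient `H = G ⧸ F` then has no nontrivial real element of odd order, and neither has
`H ⧸ O₂(H)`, so replace `H` by the latter to get `O₂(H) = 1`. A product `t * b` of two conjugate
involutions is real, hence a `2`-element. If `t * b` and `(t * b) ^ 2 = t * (b * t * b⁻¹)` were
both noncentral, they would be conjugate, which no nontrivial `2`-element is to its square. So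
conjugate involutions commute and lie in `O₂(H) = 1`, and `H` has odd order.

In a group of odd order, `a` times the class of a noncentral `a` is the whole class of `a ^ 2`, so
`a⁻¹ * b` stabilizes the class of `a` for each conjugate `b` of `a`. The stabilizer is normal and
misses `a`, so minimal normal subgroups are central, and `H` is nilpotent by induction.
-/

section Conjugation

variable {G : Type*} [Group G]

theorem mem_conjClass_iff_isConj {x a : G} : a ∈ conjClass x ↔ IsConj x a := by
  rw [isConj_iff]
  exact ⟨fun ⟨g, hg⟩ => ⟨g⁻¹, by rw [hg, inv_inv]⟩, fun ⟨g, hg⟩ => ⟨g⁻¹, by rw [← hg, inv_inv]⟩⟩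

theorem isConj_conj (g x : G) : IsConj x (g * x * g⁻¹) :=
  isConj_iff.2 ⟨g, rfl⟩

theorem isConj_inv_inv {x y : G} (h : IsConj x y) : IsConj x⁻¹ y⁻¹ := by
  obtain ⟨g, rfl⟩ := isConj_iff.1 h
  rw [conj_inv]
  exact isConj_conj g x⁻¹

theorem orderOf_eq_of_isConj {x y : G} (h : IsConj x y) : orderOf x = orderOf y :=
  orderOf_eq_orderOf_iff.2 fun n =>
    ⟨fun hx => isConj_one_right.1 (hx ▸ h.pow n), fun hy => isConj_one_left.1 (hy ▸ h.pow n)⟩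

theorem conjugatesOf_pow (x : G) (n : ℕ) : conjugatesOf (x ^ n) = (· ^ n) '' conjugatesOf x := by
  ext y
  constructor
  · intro hy
    obtain ⟨g, rfl⟩ := isConj_iff.1 hy
    exact ⟨g * x * g⁻¹, isConj_conj g x, conj_pow⟩
  · rintro ⟨a, ha, rfl⟩
    exact IsConj.pow n ha

theorem eq_one_of_isConj_pow {x : G} {n k : ℕ} (h : IsConj x (x ^ n)) (hx : x ^ n ^ k = 1) :
    x = 1 := by
  have hpow (k : ℕ) : IsConj x (x ^ n ^ k) := by
    induction k with
    | zero => rw [pow_zero, pow_one]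
    | succ k ih => exact h.trans (by simpa only [← pow_mul, ← pow_succ] using ih.pow n)
  exact isConj_one_left.1 (hx ▸ hpow k)

theorem isConj_of_isConj_map {H : Type*} [Group H] {f : G →* H} (hf : Function.Surjective f)
    {x : G} {b : H} (h : IsConj (f x) b) : ∃ a, IsConj x a ∧ f a = b := by
  obtain ⟨c, rfl⟩ := isConj_iff.1 h
  obtain ⟨g, rfl⟩ := hf c
  exact ⟨g * x * g⁻¹, isConj_conj g x, by simp⟩

theorem center_le_comap_center {H : Type*} [Group H] {f : G →* H} (hf : Function.Surjective f) :
    center G ≤ (center H).comap f := by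
  intro x hx
  refine mem_center_iff.2 fun h => ?_
  obtain ⟨g, rfl⟩ := hf h
  rw [← map_mul, ← map_mul, mem_center_iff.1 hx g]

theorem commute_of_mul_mem_center {a b : G} (h : a * b ∈ center G) : Commute a b :=
  mul_left_cancel ((mem_center_iff.1 h a).trans (mul_assoc a b a))

-- As `a * b` is central, an element conjugating `a` to `b` also conjugates `b` to `a`.
theorem isConj_inv_of_mul_mem_center {a b : G} (hab : IsConj a b) (h : a * b ∈ center G) :
    IsConj (a * b⁻¹) (a * b⁻¹)⁻¹ := by
  obtain ⟨g, rfl⟩ := isConj_iff.1 hab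
  set b := g * a * g⁻¹ with hb
  have hcomm : a * b = b * a := commute_of_mul_mem_center h
  have hswap : g * b * g⁻¹ = a := by
    have hfix : b * (g * b * g⁻¹) = b * a := by
      rw [hb, conj_mul, ← hb, mem_center_iff.1 h g, mul_inv_cancel_right, hcomm]
    exact mul_left_cancel hfix
  refine isConj_iff.2 ⟨g, ?_⟩
  rw [← conj_mul, ← conj_inv, hswap, ← hb, mul_inv_rev, inv_inv]

theorem mem_conjugatesOfSet_singleton {x a : G} : a ∈ Group.conjugatesOfSet {x} ↔ IsConj x a := by
  simp only [Group.mem_conjugatesOfSet_iff, Set.mem_singleton_iff, exists_eq_left]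

theorem isMulCommutative_normalClosure_singleton {x : G} (h : ∀ a, IsConj x a → Commute x a) :
    IsMulCommutative (normalClosure {x}) := by
  refine isMulCommutative_closure fun a ha b hb => ?_
  rw [mem_conjugatesOfSet_singleton] at ha hb
  obtain ⟨g, rfl⟩ := isConj_iff.1 ha
  obtain ⟨c, rfl⟩ := isConj_iff.1 ((isConj_conj g x).symm.trans hb)
  have hx := h _ (isConj_conj (g⁻¹ * c * g) x)
  have hb : c * (g * x * g⁻¹) * c⁻¹ = g * (g⁻¹ * c * g * x * (g⁻¹ * c * g)⁻¹) * g⁻¹ := by group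
  rw [hb, conj_mul, conj_mul, hx.eq]

theorem eq_one_or_isConj_of_mem_normalClosure_singleton {x : G} (hinv : IsConj x x⁻¹)
    (hmul : ∀ a b, IsConj x a → IsConj x b → a * b ≠ 1 → IsConj x (a * b)) {u : G}
    (hu : u ∈ normalClosure {x}) : u = 1 ∨ IsConj x u := by
  induction hu using closure_induction with
  | mem a ha => exact .inr (mem_conjugatesOfSet_singleton.1 ha)
  | one => exact .inl rfl
  | mul a b _ _ iha ihb =>
    rcases iha with rfl | ha
    · rwa [one_mul]
    rcases ihb with rfl | hb
    · exact .inr ((mul_one a).symm ▸ ha)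
    exact or_iff_not_imp_left.2 (hmul a b ha hb)
  | inv a _ iha =>
    exact iha.imp (fun h => inv_eq_one.2 h) fun h => hinv.trans (isConj_inv_inv h)

theorem stabilizer_conjugatesOf_normal (x : G) :
    (MulAction.stabilizer G (conjugatesOf x)).Normal := by
  have hconj (g k : G) : g * k * g⁻¹ ∈ conjugatesOf x ↔ k ∈ conjugatesOf x :=
    ⟨fun h => h.trans (isConj_conj g k).symm, fun h => h.trans (isConj_conj g k)⟩
  refine ⟨fun s hs g => MulAction.mem_stabilizer_set.2 fun k => ?_⟩
  have hk : (g * s * g⁻¹) • k = g * (s • (g⁻¹ * k * g)) * g⁻¹ := by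
    simp only [smul_eq_mul]
    group
  rw [hk, hconj, MulAction.mem_stabilizer_set.1 hs]
  simpa using hconj g⁻¹ k

theorem notMem_stabilizer_conjugatesOf {x : G} (hx : x ≠ 1) :
    x ∉ MulAction.stabilizer G (conjugatesOf x) := by
  intro h
  have hone : x⁻¹ • x ∈ conjugatesOf x :=
    (MulAction.mem_stabilizer_set.1 (inv_mem h) x).2 mem_conjugatesOf_self
  rw [smul_eq_mul, inv_mul_cancel] at hone
  exact hx (isConj_one_left.1 hone)

end Conjugation

section OddOrder

variable {G : Type*} [Group G]

theorem mem_of_pow_mem_of_coprime {S : Subgroup G} {x : G} {n : ℕ} (hn : n.Coprime (orderOf x))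
    (h : x ^ n ∈ S) : x ∈ S := by
  obtain ⟨m, hm⟩ := exists_pow_eq_self_of_coprime hn
  exact hm ▸ pow_mem h m

theorem mem_of_sq_mem_of_odd {S : Subgroup G} {x : G} (hx : Odd (orderOf x)) (h : x ^ 2 ∈ S) :
    x ∈ S :=
  mem_of_pow_mem_of_coprime (Nat.coprime_two_left.2 hx) h

theorem eq_one_of_sq_eq_one_of_odd {x : G} (hx : Odd (orderOf x)) (h : x ^ 2 = 1) : x = 1 :=
  mem_bot.1 (mem_of_sq_mem_of_odd hx (mem_bot.2 h))

theorem odd_orderOf_pow {x : G} (hx : Odd (orderOf x)) (n : ℕ) : Odd (orderOf (x ^ n)) :=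
  hx.of_dvd_nat (orderOf_pow_dvd n)

theorem exists_odd_orderOf_pow_two_pow {x : G} (hx : IsOfFinOrder x) :
    ∃ k, Odd (orderOf (x ^ 2 ^ k)) := by
  obtain ⟨k, m, hm, hkm⟩ := Nat.exists_eq_two_pow_mul_odd hx.orderOf_pos.ne'
  refine ⟨k, hm.of_dvd_nat (orderOf_dvd_of_pow_eq_one ?_)⟩
  rw [← pow_mul, ← hkm, pow_orderOf_eq_one]

theorem exists_odd_orderOf_map_eq {H : Type*} [Group H] (f : G →* H) {x : G} (hx : IsOfFinOrder x)
    (hfx : Odd (orderOf (f x))) : ∃ y, Odd (orderOf y) ∧ f y = f x := by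
  obtain ⟨k, hk⟩ := exists_odd_orderOf_pow_two_pow hx
  obtain ⟨m, hm⟩ := exists_pow_eq_self_of_coprime ((Nat.coprime_two_left.2 hfx).pow_left k)
  exact ⟨(x ^ 2 ^ k) ^ m, odd_orderOf_pow hk m, by rw [map_pow, map_pow, hm]⟩

/-- `G` has no nontrivial real element of odd order, an element being real if it is conjugate to
its inverse. -/
def OddRealTrivial (G : Type*) [Group G] : Prop :=
  ∀ x : G, Odd (orderOf x) → IsConj x x⁻¹ → x = 1

theorem oddRealTrivial_of_odd_card (hG : Odd (Nat.card G)) : OddRealTrivial G := by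
  intro x hx hreal
  obtain ⟨g, hg⟩ := isConj_iff.1 hreal
  have hsq : g ^ 2 ∈ centralizer {x} := by
    rw [mem_centralizer_singleton_iff, ← mul_inv_eq_iff_eq_mul]
    calc g ^ 2 * x * (g ^ 2)⁻¹ = g * (g * x * g⁻¹) * g⁻¹ := by
          simp only [sq, mul_inv_rev, mul_assoc]
      _ = x := by rw [hg, ← conj_inv, hg, inv_inv]
  have hcomm : g * x = x * g := mem_centralizer_singleton_iff.1 <|
    mem_of_sq_mem_of_odd (hG.of_dvd_nat (orderOf_dvd_natCard g)) hsq
  rw [hcomm, mul_inv_cancel_right] at hg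
  exact eq_one_of_sq_eq_one_of_odd hx (by rw [sq, ← eq_inv_iff_mul_eq_one, ← hg])

-- The odd part of a real element is again real.
theorem OddRealTrivial.exists_pow_two_pow_eq_one (hG : OddRealTrivial G) {x : G}
    (hx : IsOfFinOrder x) (hreal : IsConj x x⁻¹) : ∃ k, x ^ 2 ^ k = 1 := by
  obtain ⟨k, hk⟩ := exists_odd_orderOf_pow_two_pow hx
  exact ⟨k, hG _ hk (inv_pow x _ ▸ hreal.pow (2 ^ k))⟩

theorem odd_orderOf_mul_inv_of_commute {a b : G} (ha : Odd (orderOf a)) (hb : Odd (orderOf b))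
    (h : Commute a b) : Odd (orderOf (a * b⁻¹)) :=
  (ha.mul (orderOf_inv b ▸ hb)).of_dvd_nat h.inv_right.orderOf_mul_dvd_mul_orderOf

theorem odd_orderOf_mul_inv_of_mul_mem_center {a b : G} (ha : Odd (orderOf a)) (hab : IsConj a b)
    (h : a * b ∈ center G) : Odd (orderOf (a * b⁻¹)) :=
  odd_orderOf_mul_inv_of_commute ha (orderOf_eq_of_isConj hab ▸ ha) (commute_of_mul_mem_center h)

end OddOrder

section SquaresOneClassOutside

variable {G : Type*} [Group G]

/-- Outside the subgroup `Z`, the square of every conjugacy class of `G` meets at most one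
conjugacy class. For `Z = Z(G)` this is the hypothesis of the theorem; the case `Z = 1` is the
property that `G ⧸ Z(G)` inherits. The four elements `a`, `b`, `c`, `d` range over one class. -/
def SquaresOneClassOutside (Z : Subgroup G) : Prop :=
  ∀ ⦃a b c d : G⦄, IsConj a b → IsConj a c → IsConj a d → a * b ∉ Z → c * d ∉ Z →
    IsConj (a * b) (c * d)

namespace SquaresOneClassOutside

variable {Z : Subgroup G}

theorem isConj_sq_mul (h : SquaresOneClassOutside Z) {x a b : G} (ha : IsConj x a)
    (hb : IsConj x b) (hx : x ^ 2 ∉ Z) (hab : a * b ∉ Z) : IsConj (x ^ 2) (a * b) := by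
  rw [sq] at hx ⊢
  exact h (.refl x) ha hb hx hab

theorem of_surjective (h : SquaresOneClassOutside Z) {H : Type*} [Group H] {f : G →* H}
    (hf : Function.Surjective f) {W : Subgroup H} (hZW : Z ≤ W.comap f) :
    SquaresOneClassOutside W := by
  intro a b c d hb hc hd hbW hcdW
  obtain ⟨a, rfl⟩ := hf a
  obtain ⟨b, hab, rfl⟩ := isConj_of_isConj_map hf hb
  obtain ⟨c, hac, rfl⟩ := isConj_of_isConj_map hf hc
  obtain ⟨d, had, rfl⟩ := isConj_of_isConj_map hf hd
  simp only [← map_mul] at hbW hcdW ⊢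
  exact f.map_isConj <| h hab hac had (fun hZ => hbW (hZW hZ)) fun hZ => hcdW (hZW hZ)

theorem oddRealTrivial_of_surjective [Finite G] (h : SquaresOneClassOutside (center G))
    {H : Type*} [Group H] {f : G →* H} (hf : Function.Surjective f)
    (hker : ∀ x, Odd (orderOf x) → IsConj x x⁻¹ → f x = 1) : OddRealTrivial H := by
  intro y hy hreal
  obtain ⟨x, rfl⟩ := hf y
  obtain ⟨a, ha, hax⟩ := exists_odd_orderOf_map_eq f (isOfFinOrder_of_finite x) hy
  rw [← hax] at hy hreal ⊢
  obtain ⟨b, hab, hb⟩ := isConj_of_isConj_map hf hreal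
  refine eq_one_of_sq_eq_one_of_odd hy ?_
  by_cases hcen : a * b ∈ center G
  · have hfab := hker _ (odd_orderOf_mul_inv_of_mul_mem_center ha hab hcen)
      (isConj_inv_of_mul_mem_center hab hcen)
    simpa [hb, sq] using hfab
  have hsq : a ^ 2 ∉ center G := by
    intro hsq
    have heq := hab.eq_of_left_mem_center (mem_of_sq_mem_of_odd ha hsq)
    rw [← heq, ← sq] at hcen
    exact hcen hsq
  have hconj := f.map_isConj (h.isConj_sq_mul (.refl a) hab hsq hcen)
  rwa [map_mul, hb, mul_inv_cancel, isConj_one_left, map_pow] at hconj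

end SquaresOneClassOutside

end SquaresOneClassOutside

section FittingSubgroup

variable {G : Type*} [Group G]

theorem commutator_le_iff_le_comap_centralizer {H K V : Subgroup G} [V.Normal] :
    ⁅H, K⁆ ≤ V ↔
      H ≤ (centralizer (K.map (QuotientGroup.mk' V))).comap (QuotientGroup.mk' V) := by
  rw [← map_le_iff_le_comap, ← commutator_eq_bot_iff_le_centralizer, ← map_commutator,
    Subgroup.map_eq_bot_iff, QuotientGroup.ker_mk']

theorem iSup_commutator_le {ι : Sort*} {H : ι → Subgroup G} {K V : Subgroup G} [V.Normal]
    (h : ∀ i, ⁅H i, K⁆ ≤ V) : ⁅⨆ i, H i, K⁆ ≤ V := by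
  simp only [commutator_le_iff_le_comap_centralizer] at *
  exact iSup_le h

theorem commutator_sup_le {H K L V : Subgroup G} [V.Normal] (hK : ⁅H, K⁆ ≤ V) (hL : ⁅H, L⁆ ≤ V) :
    ⁅H, K ⊔ L⁆ ≤ V := by
  rw [commutator_comm, commutator_le_iff_le_comap_centralizer] at *
  exact sup_le hK hL

/-- The iterated commutator `[G, M, …, M]` with `n` factors `M`. Starting at `G` instead of `M`
makes its `n`-th term for `M ⊔ N` a join of intersections whose weights add up to `n`. -/
def iteratedCommutator (M : Subgroup G) : ℕ → Subgroup G
  | 0 => ⊤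
  | n + 1 => ⁅iteratedCommutator M n, M⁆

instance iteratedCommutator_normal (M : Subgroup G) [M.Normal] (n : ℕ) :
    (iteratedCommutator M n).Normal := by
  induction n with
  | zero => exact inferInstanceAs (⊤ : Subgroup G).Normal
  | succ n ih => exact commutator_normal _ _

theorem iteratedCommutator_antitone (M : Subgroup G) [M.Normal] :
    Antitone (iteratedCommutator M) :=
  antitone_nat_of_succ_le fun n => commutator_le_left (iteratedCommutator M n) M

theorem lowerCentralSeries_le_iteratedCommutator (M : Subgroup G) (n : ℕ) :
    M.lowerCentralSeries n ≤ iteratedCommutator M n := by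
  induction n with
  | zero => exact le_top
  | succ n ih => exact commutator_mono ih le_rfl

theorem iteratedCommutator_succ_le_lowerCentralSeries (M : Subgroup G) [M.Normal] (n : ℕ) :
    iteratedCommutator M (n + 1) ≤ M.lowerCentralSeries n := by
  induction n with
  | zero => exact commutator_le_right ⊤ M
  | succ n ih => exact commutator_mono ih le_rfl

theorem iteratedCommutator_eq_bot_of_lt {M : Subgroup G} [M.Normal] {c n : ℕ}
    (hc : M.lowerCentralSeries c = ⊥) (hn : c < n) : iteratedCommutator M n = ⊥ :=
  le_bot_iff.1 <| (iteratedCommutator_antitone M hn).trans <|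
    (iteratedCommutator_succ_le_lowerCentralSeries M c).trans hc.le

theorem iteratedCommutator_sup_le (M N : Subgroup G) [M.Normal] [N.Normal] (n : ℕ) :
    iteratedCommutator (M ⊔ N) n ≤
      ⨆ p ∈ HasAntidiagonal.antidiagonal n,
        iteratedCommutator M p.1 ⊓ iteratedCommutator N p.2 := by
  induction n with
  | zero => exact le_iSup₂_of_le (0, 0) (by simp) (le_inf le_rfl le_rfl)
  | succ n ih =>
    refine (commutator_mono ih le_rfl).trans <|
      iSup_commutator_le fun p => iSup_commutator_le fun hp => ?_
    rw [HasAntidiagonal.mem_antidiagonal] at hp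
    refine commutator_sup_le ?_ ?_
    · have hp' : (p.1 + 1, p.2) ∈ HasAntidiagonal.antidiagonal (n + 1) := by
        rw [HasAntidiagonal.mem_antidiagonal]
        lia
      refine le_iSup₂_of_le _ hp' (le_inf ?_ ?_)
      · exact commutator_mono inf_le_left le_rfl
      · exact (commutator_le_left _ _).trans inf_le_right
    · have hp' : (p.1, p.2 + 1) ∈ HasAntidiagonal.antidiagonal (n + 1) := by
        rw [HasAntidiagonal.mem_antidiagonal]
        lia
      refine le_iSup₂_of_le _ hp' (le_inf ?_ ?_)
      · exact (commutator_le_left _ _).trans inf_le_left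
      · exact commutator_mono inf_le_right le_rfl

theorem isNilpotent_sup {M N : Subgroup G} [M.Normal] [N.Normal] (hM : Group.IsNilpotent M)
    (hN : Group.IsNilpotent N) : Group.IsNilpotent (M ⊔ N : Subgroup G) := by
  obtain ⟨c, hc⟩ := (isNilpotent_iff_lowerCentralSeries M).1 hM
  obtain ⟨d, hd⟩ := (isNilpotent_iff_lowerCentralSeries N).1 hN
  refine isNilpotent_of_lowerCentralSeries_eq_bot (n := c + d + 1) <| le_bot_iff.1 <|
    (lowerCentralSeries_le_iteratedCommutator _ _).trans <|
    (iteratedCommutator_sup_le M N _).trans <| iSup₂_le fun p hp => ?_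
  rw [HasAntidiagonal.mem_antidiagonal] at hp
  rcases lt_or_ge c p.1 with hcp | hcp
  · exact inf_le_left.trans (iteratedCommutator_eq_bot_of_lt hc hcp).le
  · exact inf_le_right.trans (iteratedCommutator_eq_bot_of_lt hd (by lia)).le

/-- The Fitting subgroup of `G`, the join of its nilpotent normal subgroups. It is nilpotent when
`G` is finite. -/
def fittingSubgroup (G : Type*) [Group G] : Subgroup G :=
  sSup {N | N.Normal ∧ Group.IsNilpotent N}

instance fittingSubgroup_normal : (fittingSubgroup G).Normal :=
  sSup_normal _ fun _ hN => hN.1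

theorem le_fittingSubgroup {N : Subgroup G} [hN : N.Normal] (h : Group.IsNilpotent N) :
    N ≤ fittingSubgroup G :=
  le_sSup ⟨hN, h⟩

theorem isNilpotent_fittingSubgroup [Finite G] : Group.IsNilpotent (fittingSubgroup G) := by
  have hsup : SupClosed {N : Subgroup G | N.Normal ∧ Group.IsNilpotent N} := by
    rintro M ⟨hM, hM'⟩ N ⟨hN, hN'⟩
    exact ⟨sup_normal M N, isNilpotent_sup hM' hN'⟩
  exact (hsup.sSup_mem (Set.toFinite _) ⟨inferInstance, inferInstance⟩ subset_rfl).2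

theorem mem_fittingSubgroup_of_map {H : Type*} [Group H] [Finite H] {f : G →* H}
    (hker : f.ker ≤ center G) {x : G} (hx : f x ∈ fittingSubgroup H) : x ∈ fittingSubgroup G := by
  have hnil : Group.IsNilpotent ((fittingSubgroup H).comap f) := by
    have := isNilpotent_fittingSubgroup (G := H)
    refine Subgroup.isNilpotent_of_ker_le_center (f.subgroupComap (fittingSubgroup H))
      fun y hy => ?_
    have hy' : (y : G) ∈ f.ker := congrArg Subtype.val hy
    exact mem_center_iff.2 fun z => Subtype.ext (mem_center_iff.1 (hker hy') z)
  exact le_fittingSubgroup hnil hx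

end FittingSubgroup

section PCore

variable {G : Type*} [Group G] {p : ℕ}

/-- The `p`-core `O_p(G)`, the largest normal `p`-subgroup of `G`. -/
def pCore (p : ℕ) (G : Type*) [Group G] : Subgroup G :=
  sSup {N | N.Normal ∧ IsPGroup p N}

instance pCore_normal : (pCore p G).Normal :=
  sSup_normal _ fun _ hN => hN.1

theorem le_pCore {N : Subgroup G} [hN : N.Normal] (h : IsPGroup p N) : N ≤ pCore p G :=
  le_sSup ⟨hN, h⟩

theorem isPGroup_pCore : IsPGroup p (pCore p G) :=
  Sylow.sSup_of_normal _ (fun _ hN => hN.2) fun _ hN => hN.1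

theorem pCore_quotient_pCore_eq_bot : pCore p (G ⧸ pCore p G) = ⊥ := by
  have hker : IsPGroup p (QuotientGroup.mk' (pCore p G)).ker := by
    rw [QuotientGroup.ker_mk']
    exact isPGroup_pCore
  have hle := le_pCore (isPGroup_pCore.comap_of_ker_isPGroup (QuotientGroup.mk' (pCore p G)) hker)
  rw [eq_bot_iff, ← comap_le_comap_of_surjective (QuotientGroup.mk'_surjective (pCore p G))]
  rwa [MonoidHom.comap_bot, QuotientGroup.ker_mk']

theorem mem_pCore_of_commute_conjugates {x : G} {k : ℕ} (hx : x ^ p ^ k = 1)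
    (h : ∀ a, IsConj x a → Commute x a) : x ∈ pCore p G := by
  have hcomm := isMulCommutative_normalClosure_singleton h
  have hexp : ∀ u ∈ normalClosure {x}, u ^ p ^ k = 1 := by
    intro u hu
    induction hu using closure_induction with
    | mem a ha => exact isConj_one_right.1 (hx ▸ (mem_conjugatesOfSet_singleton.1 ha).pow (p ^ k))
    | one => exact one_pow _
    | mul a b ha hb iha ihb =>
      have hab : Commute a b :=
        congrArg Subtype.val (mul_comm' (⟨a, ha⟩ : normalClosure {x}) ⟨b, hb⟩)
      rw [hab.mul_pow, iha, ihb, one_mul]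
    | inv a _ iha => rw [inv_pow, iha, inv_one]
  have hgroup : IsPGroup p (normalClosure {x}) := fun u => ⟨k, Subtype.ext (hexp u u.2)⟩
  exact le_pCore hgroup (subset_normalClosure rfl)

theorem isNilpotent_of_forall_orderOf_eq [Finite G] {n : ℕ}
    (h : ∀ x : G, x ≠ 1 → orderOf x = n) : Group.IsNilpotent G := by
  rcases subsingleton_or_nontrivial G with _ | _
  · infer_instance
  obtain ⟨q, hq, hqG⟩ := Nat.exists_prime_and_dvd (Finite.one_lt_card (α := G)).ne'
  have : Fact q.Prime := ⟨hq⟩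
  obtain ⟨y, hy⟩ := exists_prime_orderOf_dvd_card' q hqG
  have hn : n = q := (h y fun hy1 => hq.one_lt.ne (by rw [← hy, hy1, orderOf_one])).symm.trans hy
  refine IsPGroup.isNilpotent (p := q) fun x => ⟨1, ?_⟩
  rcases eq_or_ne x 1 with rfl | hx
  · exact one_pow _
  · rw [pow_one, ← hn, ← h x hx, pow_orderOf_eq_one]

end PCore

section RealElements

variable {G : Type*} [Group G]

-- `y ^ 4` is conjugate to `(a⁻¹ * y) * (y⁻¹ * b) = a⁻¹ * b`, hence to `y ^ 2`; as `y` has odd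
-- order, a suitable power turns this into the claim.
theorem SquaresOneClassOutside.isConj_sq_of_three_conjugates
    (h : SquaresOneClassOutside (⊥ : Subgroup G)) {y a b : G} (hy : Odd (orderOf y))
    (hinv : IsConj y y⁻¹) (ha : IsConj y a) (hb : IsConj y b) (hya : y ≠ a) (hyb : y ≠ b)
    (hab : a ≠ b) : IsConj y (y ^ 2) := by
  have hy1 : y ≠ 1 := by
    rintro rfl
    exact hya (isConj_one_right.1 ha).symm
  have hsq : y ^ 2 ≠ 1 := mt (eq_one_of_sq_eq_one_of_odd hy) hy1
  have hfour : (y ^ 2) ^ 2 ≠ 1 := mt (eq_one_of_sq_eq_one_of_odd (odd_orderOf_pow hy 2)) hsq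
  have hinv_mul {u v : G} (hu : IsConj y u) (hv : IsConj y v) (huv : u ≠ v) :
      IsConj (y ^ 2) (u⁻¹ * v) :=
    h.isConj_sq_mul (hinv.trans (isConj_inv_inv hu)) hv (mt mem_bot.1 hsq)
      fun h1 => huv (inv_mul_eq_one.1 (mem_bot.1 h1))
  have hprod : a⁻¹ * y * (y⁻¹ * b) = a⁻¹ * b := by group
  have hsq_four : IsConj ((y ^ 2) ^ 2) (a⁻¹ * y * (y⁻¹ * b)) :=
    h.isConj_sq_mul (hinv_mul ha (.refl y) hya.symm) (hinv_mul (.refl y) hb hyb)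
      (mt mem_bot.1 hfour) fun h1 => hab (inv_mul_eq_one.1 (hprod ▸ mem_bot.1 h1))
  obtain ⟨m, hm⟩ := exists_pow_eq_self_of_coprime (Nat.coprime_two_left.2 hy)
  have hroot := ((hinv_mul ha hb hab).trans (hprod ▸ hsq_four.symm)).pow m
  rwa [pow_right_comm (y ^ 2), hm] at hroot

theorem SquaresOneClassOutside.mem_fittingSubgroup_of_bot [Finite G]
    (h : SquaresOneClassOutside (⊥ : Subgroup G)) {y : G} (hy : Odd (orderOf y))
    (hinv : IsConj y y⁻¹) : y ∈ fittingSubgroup G := by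
  rcases eq_or_ne y 1 with rfl | hy1
  · exact one_mem _
  have hsq : y ^ 2 ≠ 1 := mt (eq_one_of_sq_eq_one_of_odd hy) hy1
  suffices hnil : Group.IsNilpotent (normalClosure {y}) from
    le_fittingSubgroup hnil (subset_normalClosure rfl)
  by_cases hthree : ∃ a b, IsConj y a ∧ IsConj y b ∧ y ≠ a ∧ y ≠ b ∧ a ≠ b
  · obtain ⟨a, b, ha, hb, hya, hyb, hab⟩ := hthree
    have hconj := h.isConj_sq_of_three_conjugates hy hinv ha hb hya hyb hab
    have hmul (u v : G) (hu : IsConj y u) (hv : IsConj y v) (huv : u * v ≠ 1) :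
        IsConj y (u * v) :=
      hconj.trans (h.isConj_sq_mul hu hv (mt mem_bot.1 hsq) (mt mem_bot.1 huv))
    refine isNilpotent_of_forall_orderOf_eq (n := orderOf y) fun u hu => ?_
    have huy := (eq_one_or_isConj_of_mem_normalClosure_singleton hinv hmul u.2).resolve_left
      fun h1 => hu (Subtype.ext h1)
    rw [← orderOf_coe, orderOf_eq_of_isConj huy]
  · have hcomm (a : G) (ha : IsConj y a) : Commute y a := by
      rcases eq_or_ne y a with rfl | hya
      · exact Commute.refl y
      have hya_inv : a = y⁻¹ := by
        by_contra hne
        refine hthree ⟨a, y⁻¹, ha, hinv, hya, fun hyy => hsq ?_, hne⟩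
        rw [sq, ← eq_inv_iff_mul_eq_one, ← hyy]
      exact hya_inv ▸ (Commute.refl y).inv_right
    exact isNilpotent_of_lowerCentralSeries_eq_bot (n := 1)
      (commutator_self_eq_bot_iff.2 (isMulCommutative_normalClosure_singleton hcomm))

theorem SquaresOneClassOutside.mem_fittingSubgroup [Finite G]
    (h : SquaresOneClassOutside (center G)) {y : G} (hy : Odd (orderOf y))
    (hinv : IsConj y y⁻¹) : y ∈ fittingSubgroup G := by
  set f := QuotientGroup.mk' (center G)
  have hker : f.ker = center G := QuotientGroup.ker_mk' _
  have hbot : SquaresOneClassOutside (⊥ : Subgroup (G ⧸ center G)) :=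
    h.of_surjective (QuotientGroup.mk'_surjective _) hker.ge
  refine mem_fittingSubgroup_of_map hker.le (hbot.mem_fittingSubgroup_of_bot ?_ ?_)
  · exact hy.of_dvd_nat (orderOf_map_dvd f y)
  · exact map_inv f y ▸ f.map_isConj hinv

end RealElements

section TwoPart

variable {G : Type*} [Group G]

theorem isConj_inv_mul_of_sq_eq_one {a b : G} (ha : a ^ 2 = 1) (hb : b ^ 2 = 1) :
    IsConj (a * b) (a * b)⁻¹ := by
  refine isConj_iff.2 ⟨a, ?_⟩
  rw [sq] at ha hb
  rw [← mul_assoc, ha, one_mul, mul_inv_rev, inv_eq_of_mul_eq_one_left hb]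

theorem SquaresOneClassOutside.commute_of_isConj_of_sq_eq_one [Finite G]
    (h : SquaresOneClassOutside (center G)) (hreal : OddRealTrivial G) (hcore : pCore 2 G = ⊥)
    {t b : G} (ht : t ^ 2 = 1) (htb : IsConj t b) : Commute t b := by
  have hcentral {u : G} {k : ℕ} (hu : u ∈ center G) (hk : u ^ 2 ^ k = 1) : u = 1 := by
    have hmem := mem_pCore_of_commute_conjugates hk fun a _ => (mem_center_iff.1 hu a).symm
    rwa [hcore, mem_bot] at hmem
  have hb : b ^ 2 = 1 := isConj_one_right.1 (ht ▸ htb.pow 2)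
  have hbinv : b⁻¹ = b := inv_eq_of_mul_eq_one_left (sq b ▸ hb)
  have htinv : t⁻¹ = t := inv_eq_of_mul_eq_one_left (sq t ▸ ht)
  obtain ⟨k, hk⟩ := hreal.exists_pow_two_pow_eq_one (isOfFinOrder_of_finite (t * b))
    (isConj_inv_mul_of_sq_eq_one ht hb)
  have hsq : t * (b * t * b⁻¹) = (t * b) ^ 2 := by rw [hbinv, sq, mul_assoc, mul_assoc]
  have htb_sq : (t * b) ^ 2 = 1 := by
    by_cases hZ : t * b ∈ center G
    · rw [hcentral hZ hk, one_pow]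
    by_cases hsqZ : (t * b) ^ 2 ∈ center G
    · exact hcentral hsqZ (k := k) (by rw [pow_right_comm, hk, one_pow])
    have hconj := h htb (.refl t) (isConj_conj b t) hZ (hsq ▸ hsqZ)
    rw [eq_one_of_isConj_pow (hsq ▸ hconj) hk, one_pow]
  have hinv := inv_eq_of_mul_eq_one_left (sq (t * b) ▸ htb_sq)
  rwa [mul_inv_rev, hbinv, htinv, eq_comm] at hinv

theorem SquaresOneClassOutside.odd_card_of_pCore_two_eq_bot [Finite G]
    (h : SquaresOneClassOutside (center G)) (hreal : OddRealTrivial G) (hcore : pCore 2 G = ⊥) :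
    Odd (Nat.card G) := by
  by_contra hodd
  rw [Nat.not_odd_iff_even, even_iff_two_dvd] at hodd
  obtain ⟨t, ht⟩ := exists_prime_orderOf_dvd_card' 2 hodd
  have hsq : t ^ 2 = 1 := ht ▸ pow_orderOf_eq_one t
  have hmem : t ∈ pCore 2 G := mem_pCore_of_commute_conjugates (k := 1) hsq fun b htb =>
    h.commute_of_isConj_of_sq_eq_one hreal hcore hsq htb
  rw [hcore, mem_bot] at hmem
  rw [hmem, orderOf_one] at ht
  contradiction

end TwoPart

section OddPart

variable {G : Type*} [Group G]

theorem OddRealTrivial.mul_notMem_center (hreal : OddRealTrivial G) {a b : G}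
    (ha : Odd (orderOf a)) (hab : IsConj a b) (haZ : a ∉ center G) : a * b ∉ center G := by
  intro hZ
  have heq : a = b := mul_inv_eq_one.1 <|
    hreal _ (odd_orderOf_mul_inv_of_mul_mem_center ha hab hZ) (isConj_inv_of_mul_mem_center hab hZ)
  rw [← heq, ← sq] at hZ
  exact haZ (mem_of_sq_mem_of_odd ha hZ)

theorem SquaresOneClassOutside.smul_conjugatesOf_self [Finite G]
    (h : SquaresOneClassOutside (center G)) (hreal : OddRealTrivial G) {a : G}
    (ha : Odd (orderOf a)) (haZ : a ∉ center G) :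
    a • conjugatesOf a = conjugatesOf (a ^ 2) := by
  refine Set.eq_of_subset_of_ncard_le ?_ ?_
  · rintro _ ⟨b, hab, rfl⟩
    exact h.isConj_sq_mul (.refl a) hab (fun hsq => haZ (mem_of_sq_mem_of_odd ha hsq))
      (hreal.mul_notMem_center ha hab haZ)
  · rw [Set.ncard_smul_set, conjugatesOf_pow]
    exact Set.ncard_image_le

theorem SquaresOneClassOutside.inv_mul_mem_stabilizer_conjugatesOf [Finite G]
    (h : SquaresOneClassOutside (center G)) (hreal : OddRealTrivial G) {a b : G}
    (ha : Odd (orderOf a)) (haZ : a ∉ center G) (hab : IsConj a b) :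
    a⁻¹ * b ∈ MulAction.stabilizer G (conjugatesOf a) := by
  have hbZ : b ∉ center G := fun hbZ => haZ (hab.eq_of_right_mem_center hbZ ▸ hbZ)
  have hb := h.smul_conjugatesOf_self hreal (orderOf_eq_of_isConj hab ▸ ha) hbZ
  rw [← hab.conjugatesOf_eq, ← (hab.pow 2).conjugatesOf_eq] at hb
  rw [MulAction.mem_stabilizer_iff, mul_smul, hb, ← h.smul_conjugatesOf_self hreal ha haZ,
    inv_smul_smul]

theorem SquaresOneClassOutside.center_ne_bot_of_odd_card [Finite G] [Nontrivial G]
    (h : SquaresOneClassOutside (center G)) (hodd : Odd (Nat.card G)) : center G ≠ ⊥ := by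
  have hreal := oddRealTrivial_of_odd_card hodd
  obtain ⟨N, ⟨hN, hNbot⟩, hmin⟩ := (Set.toFinite {N : Subgroup G | N.Normal ∧ N ≠ ⊥}).exists_minimal
    ⟨⊤, inferInstance, top_ne_bot⟩
  suffices hNZ : N ≤ center G from ne_bot_of_le_ne_bot hNbot hNZ
  intro x hx
  by_contra hxZ
  have hx1 : x ≠ 1 := fun h1 => hxZ (h1 ▸ one_mem _)
  obtain ⟨g, hg⟩ : ∃ g, g * x * g⁻¹ ≠ x := by
    by_contra! hfix
    exact hxZ (mem_center_iff.2 fun g => mul_inv_eq_iff_eq_mul.1 (hfix g))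
  set S := MulAction.stabilizer G (conjugatesOf x)
  have hS : S.Normal := stabilizer_conjugatesOf_normal x
  have hs : x⁻¹ * (g * x * g⁻¹) ∈ S ⊓ N :=
    ⟨h.inv_mul_mem_stabilizer_conjugatesOf hreal (hodd.of_dvd_nat (orderOf_dvd_natCard x)) hxZ
      (isConj_conj g x), N.mul_mem (N.inv_mem hx) (hN.conj_mem x hx g)⟩
  have hSN : S ⊓ N ≠ ⊥ := fun hbot =>
    hg (inv_mul_eq_one.1 (mem_bot.1 (hbot ▸ hs))).symm
  exact notMem_stabilizer_conjugatesOf hx1 (hmin ⟨inferInstance, hSN⟩ inf_le_right hx).1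

theorem SquaresOneClassOutside.isNilpotent_of_odd_card [Finite G]
    (h : SquaresOneClassOutside (center G)) (hodd : Odd (Nat.card G)) : Group.IsNilpotent G := by
  induction hn : Nat.card G using Nat.strong_induction_on generalizing G with
  | _ n ih =>
  rcases subsingleton_or_nontrivial G with _ | _
  · infer_instance
  have hcard := card_eq_card_quotient_mul_card_subgroup (center G)
  have hlt : Nat.card (G ⧸ center G) < n := by
    rw [← hn, hcard]
    exact lt_mul_of_one_lt_right Nat.card_pos
      ((one_lt_card_iff_ne_bot _).2 (h.center_ne_bot_of_odd_card hodd))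
  have hsurj := QuotientGroup.mk'_surjective (center G)
  exact Group.of_quotient_center_nilpotent <|
    ih _ hlt (h.of_surjective hsurj (center_le_comap_center hsurj))
      (hodd.of_dvd_nat ⟨_, hcard⟩) rfl

theorem SquaresOneClassOutside.isNilpotent_quotient_pCore_two [Finite G]
    (h : SquaresOneClassOutside (center G)) (hreal : OddRealTrivial G) :
    Group.IsNilpotent (G ⧸ pCore 2 G) := by
  have hsurj := QuotientGroup.mk'_surjective (pCore 2 G)
  have hquot := h.of_surjective hsurj (center_le_comap_center hsurj)
  have hquot_real := h.oddRealTrivial_of_surjective hsurj fun x hx hinv => by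
    rw [hreal x hx hinv, map_one]
  exact hquot.isNilpotent_of_odd_card <|
    hquot.odd_card_of_pCore_two_eq_bot hquot_real pCore_quotient_pCore_eq_bot

end OddPart

section Quotients

variable {G : Type*} [Group G]

theorem isPGroup_comap_mk'_quotient {p : ℕ} {N : Subgroup G} [N.Normal] {P : Subgroup (G ⧸ N)}
    (hP : IsPGroup p P) :
    IsPGroup p (P.comap (QuotientGroup.mk' N) ⧸ N.subgroupOf (P.comap (QuotientGroup.mk' N))) := by
  set f := (QuotientGroup.mk' N).subgroupComap P
  have hker : N.subgroupOf (P.comap (QuotientGroup.mk' N)) = f.ker := by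
    ext x
    rw [mem_subgroupOf, MonoidHom.mem_ker, ← QuotientGroup.eq_one_iff]
    exact (Subtype.ext_iff (a1 := f x) (a2 := 1)).symm
  exact (hP.of_injective _ (QuotientGroup.kerLift_injective f)).of_equiv
    (QuotientGroup.quotientMulEquivOfEq hker.symm)

theorem isNilpotent_quotient_comap {H : Type*} [Group H] (f : G →* H) {P : Subgroup H} [P.Normal]
    (hP : Group.IsNilpotent (H ⧸ P)) : Group.IsNilpotent (G ⧸ P.comap f) := by
  refine Subgroup.isNilpotent_of_ker_le_center (QuotientGroup.map (P.comap f) P f le_rfl) ?_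
  rw [QuotientGroup.ker_map, QuotientGroup.map_mk'_self]
  exact bot_le

end Quotients

theorem squaresOneClassOutside_center_of_conjClass_mul_subset {G : Type*} [Group G]
    (h : ∀ x : G, ∃ d : G,
      conjClass x * conjClass x ⊆ (Subgroup.center G : Set G) ∪ conjClass d) :
    SquaresOneClassOutside (center G) := by
  intro a b c d hab hac had habZ hcdZ
  obtain ⟨e, he⟩ := h a
  have hsq {u v : G} (hu : IsConj a u) (hv : IsConj a v) (huv : u * v ∉ center G) :
      IsConj e (u * v) :=
    mem_conjClass_iff_isConj.1 <| (he <| Set.mul_mem_mul (mem_conjClass_iff_isConj.2 hu)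
      (mem_conjClass_iff_isConj.2 hv)).resolve_left huv
  exact (hsq (.refl a) hab habZ).symm.trans (hsq hac had hcdZ)

/-- **Corollary F.** If every conjugacy class `K` of a finite group `G` satisfies that `K²`
is a union of conjugacy classes all of which are central except at most one, then there are
normal subgroups `N ≤ M` of `G` with `N` nilpotent, `M/N` a 2-group, and `G/M` nilpotent;
in particular `G` is solvable (of Fitting length at most 3). -/
theorem all_squares_union_central_classes
    {G : Type*} [Group G] [Fintype G]
    (h : ∀ x : G, ∃ d : G,
      conjClass x * conjClass x ⊆ (Subgroup.center G : Set G) ∪ conjClass d) :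
    ∃ (N M : Subgroup G) (_ : N.Normal) (_ : M.Normal), N ≤ M ∧
      Group.IsNilpotent N ∧
      IsPGroup 2 (M ⧸ N.subgroupOf M) ∧
      Group.IsNilpotent (G ⧸ M) ∧
      IsSolvable G := by
  have hG := squaresOneClassOutside_center_of_conjClass_mul_subset h
  set F := fittingSubgroup G
  set P := pCore 2 (G ⧸ F)
  have hsurj := QuotientGroup.mk'_surjective F
  have hquot := hG.of_surjective hsurj (center_le_comap_center hsurj)
  have hreal : OddRealTrivial (G ⧸ F) := hG.oddRealTrivial_of_surjective hsurj fun x hx hinv =>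
    (QuotientGroup.eq_one_iff x).2 (hG.mem_fittingSubgroup hx hinv)
  have hP : IsPGroup 2 P := isPGroup_pCore
  have hGP : Group.IsNilpotent ((G ⧸ F) ⧸ P) := hquot.isNilpotent_quotient_pCore_two hreal
  have hF : Group.IsNilpotent F := isNilpotent_fittingSubgroup
  have hsolvable : Group.IsSolvable (G ⧸ F) :=
    have := hP.isNilpotent
    (Group.isSolvable_iff_subgroup_quotient P).2 ⟨inferInstance, inferInstance⟩
  exact ⟨F, P.comap (QuotientGroup.mk' F), inferInstance, inferInstance,
    (QuotientGroup.ker_mk' F).ge.trans (MonoidHom.ker_le_comap _ P), hF,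
    isPGroup_comap_mk'_quotient hP, isNilpotent_quotient_comap _ hGP,
    (Group.isSolvable_iff_subgroup_quotient F).2 ⟨inferInstance, hsolvable⟩⟩
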